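/- arXiv:2602.16046 — 3 statements merged into one kernel-verified Lean document; each statement's English description precedes it below -/
import Mathlib

section
/- Assume that the dominating number 𝔡 is regular (cf(𝔡) = 𝔡). Then every 𝔡-unbounded set A ⊆ [ω]^ω is ≤_U-unbounded for some free ultrafilter U on ℕ with 𝔟(U) = 𝔡. -/
open Cardinal

/-- `a ≤* b`: the set `[a ≤ b]` is cofinite. -/
def LeStar (a b : ℕ → ℕ) : Prop := {n | ¬ a n ≤ b n}.Finite

/-- `a ≤^∞ b`: the set `[a ≤ b]` is infinite. -/
def LeInf (a b : ℕ → ℕ) : Prop := {n | a n ≤ b n}.Infinite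

/-- `a ≤_U b`: the set `[a ≤ b]` belongs to the ultrafilter `U`. -/
def LeU (U : Ultrafilter ℕ) (a b : ℕ → ℕ) : Prop := {n | a n ≤ b n} ∈ U

/-- An ultrafilter is free if it extends the cofinite filter. -/
def Free (U : Ultrafilter ℕ) : Prop := (U : Filter ℕ) ≤ Filter.cofinite

/-- Elements of `[ω]^ω`, identified with their increasing enumerations. -/
abbrev IncSeq : Type := {f : ℕ → ℕ // StrictMono f}

/-- A subset of `[ω]^ω` is bounded if some element of `[ω]^ω` `≤*`-dominates it. -/
def Bounded (A : Set IncSeq) : Prop := ∃ b : IncSeq, ∀ a ∈ A, LeStar a.1 b.1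

/-- A subset of `[ω]^ω` is dominating if it `≤*`-dominates every element of `[ω]^ω`. -/
def Dominating (D : Set IncSeq) : Prop := ∀ a : IncSeq, ∃ d ∈ D, LeStar a.1 d.1

/-- A subset of `[ω]^ω` is `≤_U`-bounded if some element of `[ω]^ω` `≤_U`-dominates it. -/
def UBounded (U : Ultrafilter ℕ) (A : Set IncSeq) : Prop := ∃ b : IncSeq, ∀ a ∈ A, LeU U a.1 b.1

/-- `𝔟`: the least cardinality of an unbounded subset of `[ω]^ω`. -/
noncomputable def frakB : Cardinal := sInf {c | ∃ A : Set IncSeq, ¬ Bounded A ∧ c = #A}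

/-- `𝔡`: the least cardinality of a dominating subset of `[ω]^ω`. -/
noncomputable def frakD : Cardinal := sInf {c | ∃ D : Set IncSeq, Dominating D ∧ c = #D}

/-- `𝔟(U)`: the least cardinality of a `≤_U`-unbounded subset of `[ω]^ω`. -/
noncomputable def frakBU (U : Ultrafilter ℕ) : Cardinal :=
  sInf {c | ∃ A : Set IncSeq, ¬ UBounded U A ∧ c = #A}

/-- A set `A ⊆ [ω]^ω` is `𝔡`-unbounded if `|A| ≥ 𝔡` and every bounded subset of `A`
has cardinality less than `𝔡`. -/
def DUnbounded (A : Set IncSeq) : Prop :=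
  frakD ≤ #A ∧ ∀ B ⊆ A, Bounded B → #B < frakD

/-!
Let `(e i)` enumerate a dominating family in order type `𝔡`. By recursion one picks `x i ∈ A` so
that the sets `[e i ≤ x j]`, `i < j`, have infinite finite intersections: an infinite set `Z` and a
function `g` rule out only those `a` with `Z ∩ [g ≤ a]` finite, these form a bounded set, and fewer
than `𝔡` bounded sets cannot cover `A` when `𝔡` is regular. A free ultrafilter `U` containing all
the sets `[e i ≤ x j]` makes `(x i)` a `≤_U`-scale of length `𝔡`, whence
`cf(𝔡) ≤ 𝔟(U) ≤ 𝔡`.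
-/

open Filter Set

lemma exists_incSeq_ge (f : ℕ → ℕ) : ∃ b : IncSeq, ∀ n, f n ≤ b.1 n :=
  ⟨⟨fun n ↦ partialSups f n + n, (partialSups f).monotone.add_strictMono strictMono_id⟩,
    fun n ↦ (le_partialSups f n).trans (Nat.le_add_right _ n)⟩

section Dominating

lemma Dominating.infinite {D : Set IncSeq} (hD : Dominating D) : D.Infinite := by
  intro hfin
  obtain ⟨f, hf⟩ := (hfin.image Subtype.val).bddAbove
  obtain ⟨a, ha⟩ := exists_incSeq_ge (f + 1)
  obtain ⟨d, hd, had⟩ := hD a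
  obtain ⟨n, hn⟩ := had.infinite_compl.nonempty
  have hle : a.1 n ≤ d.1 n := not_not.1 hn
  have hge : f n + 1 ≤ a.1 n := ha n
  exact (hge.trans hle).not_gt (Nat.lt_succ_of_le (hf (mem_image_of_mem _ hd) n))

lemma exists_dominating_mk_eq_frakD : ∃ D : Set IncSeq, Dominating D ∧ frakD = #D :=
  csInf_mem (s := {c | ∃ D : Set IncSeq, Dominating D ∧ c = #D})
    ⟨_, univ, fun a ↦ ⟨a, mem_univ a, by simp [LeStar]⟩, rfl⟩

lemma exists_dominating_range : ∃ e : frakD.ord.ToType → IncSeq, Dominating (range e) := by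
  obtain ⟨D, hD, hcard⟩ := exists_dominating_mk_eq_frakD
  obtain ⟨e⟩ : Nonempty (frakD.ord.ToType ≃ D) := Cardinal.eq.1 (by rw [mk_ord_toType, hcard])
  refine ⟨fun i ↦ e i, ?_⟩
  rwa [← Function.comp_def Subtype.val e, e.surjective.range_comp, Subtype.range_coe]

lemma aleph0_le_frakD : ℵ₀ ≤ frakD := by
  obtain ⟨D, hD, hcard⟩ := exists_dominating_mk_eq_frakD
  exact hcard ▸ infinite_iff.1 hD.infinite.to_subtype

end Dominating

lemma exists_ultrafilter_le_cofinite_of_directed {α ι : Type*} [Nonempty ι] {s : ι → Set α}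
    (hdir : Directed (· ⊇ ·) s) (hinf : ∀ i, (s i).Infinite) :
    ∃ U : Ultrafilter α, (U : Filter α) ≤ cofinite ∧ ∀ i, s i ∈ U := by
  have : (cofinite ⊓ ⨅ i, 𝓟 (s i)).NeBot :=
    inf_neBot_iff_frequently_right.2 fun {p} hp ↦ by
      obtain ⟨i, -, hi⟩ := (hasBasis_iInf_principal hdir).eventually_iff.1 hp
      exact frequently_cofinite_iff_infinite.2 ((hinf i).mono fun _ hn ↦ hi hn)
  obtain ⟨U, hU⟩ := Ultrafilter.exists_le (cofinite ⊓ ⨅ i, 𝓟 (s i))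
  exact ⟨U, hU.trans inf_le_left,
    fun i ↦ le_principal_iff.1 (hU.trans (inf_le_right.trans (iInf_le _ i)))⟩

section LeU

variable {U : Ultrafilter ℕ} {a b c : ℕ → ℕ}

lemma LeU.trans (hab : LeU U a b) (hbc : LeU U b c) : LeU U a c :=
  mem_of_superset (inter_mem hab hbc) fun _ hn ↦ le_trans (mem_ofPred.1 hn.1) hn.2

lemma LeStar.leU (hU : Free U) (h : LeStar a b) : LeU U a b :=
  hU (mem_cofinite.2 h)

end LeU

section Scale

variable {I : Type} {U : Ultrafilter ℕ}

/-- A `≤_U`-scale: a family eventually `≤_U`-above each element of `[ω]^ω`. The family is not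
required to be `≤_U`-increasing, and its index set plays the role of its length. -/
def IsUScale [Preorder I] (U : Ultrafilter ℕ) (x : I → IncSeq) : Prop :=
  ∀ b : IncSeq, ∀ᶠ j in atTop, LeU U b.1 (x j).1

lemma IsUScale.not_uBounded_range [Preorder I] [IsDirectedOrder I] [Nonempty I] {x : I → IncSeq}
    (hx : IsUScale U x) : ¬ UBounded U (range x) := by
  rintro ⟨b, hb⟩
  obtain ⟨j, hj⟩ := (hx ⟨fun n ↦ b.1 n + 1, b.2.add_const 1⟩).exists
  obtain ⟨n, hn⟩ := U.nonempty_of_mem (hj.trans (hb _ (mem_range_self j)))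
  exact Nat.not_succ_le_self _ hn

lemma IsUScale.frakBU_le_mk [Preorder I] [IsDirectedOrder I] [Nonempty I] {x : I → IncSeq}
    (hx : IsUScale U x) : frakBU U ≤ #I :=
  calc frakBU U ≤ #(range x) := csInf_le' ⟨range x, hx.not_uBounded_range, rfl⟩
    _ ≤ #I := mk_range_le

lemma IsUScale.cof_le_frakBU [LinearOrder I] [Nonempty I] {x : I → IncSeq}
    (hx : IsUScale U x) : Order.cof I ≤ frakBU U := by
  refine le_csInf ⟨_, range x, hx.not_uBounded_range, rfl⟩ ?_
  rintro _ ⟨S, hS, rfl⟩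
  choose idx hidx using fun b ↦ eventually_atTop.1 (hx b)
  have hcof : IsCofinal (idx '' S) := by
    by_contra h
    obtain ⟨j, hj⟩ := not_isCofinal_iff.1 h
    exact hS ⟨x j, fun b hb ↦ hidx b j (hj _ (mem_image_of_mem idx hb)).le⟩
  exact (Order.cof_le hcof).trans mk_image_le

end Scale

lemma mk_finset_lt {α : Type*} {c : Cardinal} (hc : ℵ₀ ≤ c) (h : #α < c) : #(Finset α) < c := by
  cases finite_or_infinite α
  · exact (lt_aleph0_of_finite _).trans_le hc
  · rwa [mk_finset_of_infinite]

lemma exists_forall_of_eqOn_Iio {I α : Type*} [Preorder I] [WellFoundedLT I] [Nonempty α]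
    {P : I → (I → α) → α → Prop}
    (hcongr : ∀ i x y a, EqOn x y (Iio i) → P i x a → P i y a) (h : ∀ i x, ∃ a, P i x a) :
    ∃ x : I → α, ∀ i, P i x (x i) := by
  classical
  choose next hnext using h
  let extend (i : I) (y : ∀ j, j < i → α) (j : I) : α :=
    if hj : j < i then y j hj else Classical.arbitrary α
  let x : I → α := (wellFounded_lt (α := I)).fix fun i y ↦ next i (extend i y)
  have hx (i : I) : x i = next i (extend i fun j _ ↦ x j) := WellFounded.fix_eq _ _ _
  have hext (i : I) : EqOn (extend i fun j _ ↦ x j) x (Iio i) := fun j hj ↦ dif_pos (mem_Iio.1 hj)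
  exact ⟨x, fun i ↦ hcongr i _ x _ (hext i) (hx i ▸ hnext i _)⟩

section Interlacing

variable {I : Type*} {e : I → ℕ → ℕ} {x y : I → IncSeq} {F : Finset I} {i : I}

/-- The intersection of the sets `[e i ≤ x j]` over all `i < j` in the finite set `F`. A free
ultrafilter can contain all the sets `[e i ≤ x j]` with `i < j` if and only if each of these
intersections is infinite. -/
def interlacingSet [LT I] (e : I → ℕ → ℕ) (x : I → IncSeq) (F : Finset I) : Set ℕ :=
  {n | ∀ i ∈ F, ∀ j ∈ F, i < j → e i n ≤ (x j).1 n}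

lemma interlacingSet_antitone [LT I] : Antitone (interlacingSet e x) :=
  fun _ _ hFG _ hn i hi j hj hij ↦ hn i (hFG hi) j (hFG hj) hij

lemma interlacingSet_congr [LT I] (h : EqOn x y F) :
    interlacingSet e x F = interlacingSet e y F := by
  ext n
  exact forall₄_congr fun i _ j hj ↦ by rw [h hj]

variable [LinearOrder I]

lemma interlacingSet_insert (hF : ∀ j ∈ F, j < i) :
    interlacingSet e x (insert i F) =
      {n ∈ interlacingSet e x F | ∀ j ∈ F, e j n ≤ (x i).1 n} := by
  ext n
  simp only [interlacingSet, Finset.forall_mem_insert, mem_ofPred_eq]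
  grind

lemma exists_free_forall_leU (hinf : ∀ F, (interlacingSet e x F).Infinite) :
    ∃ U, Free U ∧ ∀ i j, i < j → LeU U (e i) (x j).1 := by
  obtain ⟨U, hU, hmem⟩ :=
    exists_ultrafilter_le_cofinite_of_directed interlacingSet_antitone.directed_ge hinf
  exact ⟨U, hU, fun i j hij ↦
    mem_of_superset (hmem {i, j}) fun n hn ↦ hn i (by simp) j (by simp) hij⟩

end Interlacing

section DUnbounded

lemma bounded_setOf_finite_le {Z : Set ℕ} (hZ : Z.Infinite) (g : ℕ → ℕ) :
    Bounded {a | {n ∈ Z | g n ≤ a.1 n}.Finite} := by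
  choose next hmem hlt using fun n ↦ hZ.exists_gt n
  obtain ⟨b, hb⟩ := exists_incSeq_ge fun n ↦ g (next n)
  refine ⟨b, fun a ha ↦ ?_⟩
  obtain ⟨N, hN⟩ := Set.Finite.bddAbove ha
  -- For `n > N` one has `a n ≤ a (next n) < g (next n)`, as `N < n < next n ∈ Z`.
  refine (finite_Iic N).subset fun n (hn : ¬ a.1 n ≤ b.1 n) ↦ ?_
  have hg : g (next n) ≤ a.1 (next n) :=
    (hb n).trans ((not_le.1 hn).le.trans (a.2 (hlt n)).le)
  exact (hlt n).le.trans (hN ⟨hmem n, hg⟩)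

variable {A : Set IncSeq}

lemma DUnbounded.not_subset_iUnion_bounded (hA : DUnbounded A) (hreg : frakD.IsRegular)
    {J : Type} (hJ : #J < frakD) {B : J → Set IncSeq} (hB : ∀ j, Bounded (B j)) :
    ¬ A ⊆ ⋃ j, B j := by
  intro hcover
  have hpiece (j : J) : #↥(A ∩ B j) < frakD := by
    obtain ⟨b, hb⟩ := hB j
    exact hA.2 _ inter_subset_left ⟨b, fun a ha ↦ hb a ha.2⟩
  have hunion : #↥(⋃ j, A ∩ B j) < frakD :=
    (card_iUnion_lt_iff_forall_of_isRegular hreg hJ).2 hpiece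
  rw [← inter_iUnion, inter_eq_self_of_subset_left hcover] at hunion
  exact hA.1.not_gt hunion

lemma DUnbounded.exists_infinite_le (hA : DUnbounded A) (hreg : frakD.IsRegular)
    {J : Type} (hJ : #J < frakD) {Z : J → Set ℕ} (hZ : ∀ j, (Z j).Infinite) (g : J → ℕ → ℕ) :
    ∃ a ∈ A, ∀ j, {n ∈ Z j | g j n ≤ a.1 n}.Infinite := by
  obtain ⟨a, haA, ha⟩ := not_subset.1 <|
    hA.not_subset_iUnion_bounded hreg hJ fun j ↦ bounded_setOf_finite_le (hZ j) (g j)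
  exact ⟨a, haA, fun j hfin ↦ ha (mem_iUnion_of_mem j hfin)⟩

variable {I : Type} [LinearOrder I]

lemma DUnbounded.exists_infinite_interlacingSet_le (hA : DUnbounded A) (hreg : frakD.IsRegular)
    {i : I} (hi : #(Iio i) < frakD) (e : I → ℕ → ℕ) (x : I → IncSeq) :
    ∃ a ∈ A, ∀ F : Finset I, (∀ j ∈ F, j < i) → (interlacingSet e x F).Infinite →
      {n ∈ interlacingSet e x F | ∀ j ∈ F, e j n ≤ a.1 n}.Infinite := by
  let toFinset (G : Finset (Iio i)) : Finset I := G.map (Function.Embedding.subtype _)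
  let J := {G : Finset (Iio i) // (interlacingSet e x (toFinset G)).Infinite}
  have hJ : #J < frakD := (mk_subtype_le _).trans_lt (mk_finset_lt hreg.aleph0_le hi)
  obtain ⟨a, haA, ha⟩ := hA.exists_infinite_le hreg hJ (fun G ↦ G.2)
    fun G n ↦ (toFinset G.1).sup (e · n)
  refine ⟨a, haA, fun F hF hinf ↦ ?_⟩
  obtain ⟨G, rfl⟩ : ∃ G, toFinset G = F :=
    ⟨F.subtype (· ∈ Iio i), Finset.subtype_map_of_mem hF⟩
  simpa only [Finset.sup_le_iff] using ha ⟨G, hinf⟩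

variable [WellFoundedLT I]

lemma DUnbounded.exists_forall_infinite_interlacingSet (hA : DUnbounded A)
    (hreg : frakD.IsRegular) (hI : ∀ i : I, #(Iio i) < frakD) (e : I → ℕ → ℕ) :
    ∃ x : I → IncSeq, range x ⊆ A ∧ ∀ F, (interlacingSet e x F).Infinite := by
  have : Nonempty IncSeq := ⟨⟨id, strictMono_id⟩⟩
  obtain ⟨x, hx⟩ := exists_forall_of_eqOn_Iio
    (P := fun i x a ↦ a ∈ A ∧ ∀ F : Finset I, (∀ j ∈ F, j < i) →
      (interlacingSet e x F).Infinite →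
        {n ∈ interlacingSet e x F | ∀ j ∈ F, e j n ≤ a.1 n}.Infinite)
    (fun i x y a hxy h ↦ ⟨h.1, fun F hF ↦
      interlacingSet_congr (e := e) (hxy.mono hF) ▸ h.2 F hF⟩)
    fun i x ↦ hA.exists_infinite_interlacingSet_le hreg (hI i) e x
  refine ⟨x, range_subset_iff.2 fun i ↦ (hx i).1, fun F ↦ ?_⟩
  induction F using Finset.induction_on_max with
  | empty => simpa [interlacingSet] using infinite_univ
  | insert i F hF ih => exact interlacingSet_insert hF ▸ (hx i).2 F hF ih

lemma DUnbounded.exists_isUScale [NoMaxOrder I] (hA : DUnbounded A) (hreg : frakD.IsRegular)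
    (hI : ∀ i : I, #(Iio i) < frakD) {e : I → IncSeq} (he : Dominating (range e)) :
    ∃ U, Free U ∧ ∃ x : I → IncSeq, range x ⊆ A ∧ IsUScale U x := by
  obtain ⟨x, hxA, hx⟩ := hA.exists_forall_infinite_interlacingSet hreg hI fun i ↦ (e i).1
  obtain ⟨U, hU, hex⟩ := exists_free_forall_leU hx
  refine ⟨U, hU, x, hxA, fun b ↦ ?_⟩
  obtain ⟨_, ⟨i, rfl⟩, hbe⟩ := he b
  filter_upwards [eventually_gt_atTop i] with j hij
  exact (hbe.leU hU).trans (hex i j hij)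

end DUnbounded

/-- if `cf(𝔡) = 𝔡`, then every `𝔡`-unbounded set `A ⊆ [ω]^ω` is
`≤_U`-unbounded for some free ultrafilter `U` with `𝔟(U) = 𝔡`. -/
theorem stmt0 (hreg : frakD.ord.cof = frakD)
    (A : Set IncSeq) (hA : DUnbounded A) :
    ∃ U : Ultrafilter ℕ, Free U ∧ ¬ UBounded U A ∧ frakBU U = frakD := by
  let I := frakD.ord.ToType
  have : Nonempty I := by simpa [I] using (aleph0_pos.trans_le aleph0_le_frakD).ne'
  have : NoMaxOrder I := Cardinal.noMaxOrder aleph0_le_frakD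
  have hI (i : I) : #(Iio i) < frakD := by simpa [I] using mk_Iio_lt i (by simp [I])
  obtain ⟨e, he⟩ := exists_dominating_range
  obtain ⟨U, hU, x, hxA, hx⟩ := hA.exists_isUScale ⟨aleph0_le_frakD, hreg.ge⟩ hI he
  refine ⟨U, hU, fun ⟨b, hb⟩ ↦ hx.not_uBounded_range ⟨b, fun a ha ↦ hb a (hxA ha)⟩, ?_⟩
  refine le_antisymm (hx.frakBU_le_mk.trans_eq (mk_ord_toType _)) ?_
  calc frakD = Order.cof I := by rw [Ordinal.cof_toType, hreg]
    _ ≤ frakBU U := hx.cof_le_frakBU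
end

section
/- Assume that the dominating number 𝔡 is regular (cf(𝔡) = 𝔡). Let A ⊆ [ω]^ω be 𝔡-unbounded and let C ⊆ [ω]^ω have cardinality less than 𝔡. Then there exists a ∈ A such that c ≤^∞ a for every c ∈ C. -/
open Cardinal

universe u

theorem mk_biUnion_lt_of_lt_cof_ord {ι α : Type u} {s : Set ι} {t : ι → Set α} {κ : Cardinal.{u}}
    (hs : #s < κ.ord.cof) (ht : ∀ i ∈ s, #(t i) < κ) : #(⋃ i ∈ s, t i) < κ := by
  have hsκ : #s < κ := hs.trans_le (Ordinal.cof_ord_le κ)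
  rcases s.eq_empty_or_nonempty with rfl | hne
  · simpa only [Set.biUnion_empty, mk_eq_zero] using hsκ
  · have hone : 1 ≤ #s := Cardinal.one_le_iff_ne_zero.2 (mk_ne_zero_iff.2 hne.to_subtype)
    have hcof : 1 < κ.ord.cof := hone.trans_lt hs
    have hκ : ℵ₀ ≤ κ := (Ordinal.aleph0_le_cof_iff.2 hcof).trans (Ordinal.cof_ord_le κ)
    calc #(⋃ i ∈ s, t i) ≤ #s * ⨆ i : s, #(t i) := mk_biUnion_le t s
      _ < κ := mul_lt_of_lt hκ hsκ (iSup_lt_of_lt_cof_ord hs fun i => ht i i.2)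

theorem leStar_of_not_leInf {a b : ℕ → ℕ} (h : ¬ LeInf a b) : LeStar b a :=
  (Set.not_infinite.1 h).subset fun _ hn => (not_le.1 hn).le

theorem bounded_sep_not_leInf (A : Set IncSeq) (c : IncSeq) :
    Bounded {a ∈ A | ¬ LeInf c.1 a.1} :=
  ⟨c, fun _ ha => leStar_of_not_leInf ha.2⟩

theorem stmt1_general {κ : Cardinal} {A C : Set IncSeq} (hA : κ ≤ #A)
    (hbdd : ∀ B ⊆ A, Bounded B → #B < κ) (hC : #C < κ.ord.cof) :
    ∃ a ∈ A, ∀ c ∈ C, LeInf c.1 a.1 := by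
  by_contra! h
  have hcover : A ⊆ ⋃ c ∈ C, {a ∈ A | ¬ LeInf c.1 a.1} := fun a ha =>
    let ⟨_, hc, hca⟩ := h a ha
    Set.mem_biUnion hc ⟨ha, hca⟩
  have hsmall : #(⋃ c ∈ C, {a ∈ A | ¬ LeInf c.1 a.1}) < κ :=
    mk_biUnion_lt_of_lt_cof_ord hC fun c _ =>
      hbdd _ (Set.sep_subset _ _) (bounded_sep_not_leInf A c)
  exact (hA.trans (mk_le_mk_of_subset hcover)).not_gt hsmall

/-- if `cf(𝔡) = 𝔡`, `A ⊆ [ω]^ω` is `𝔡`-unbounded and `C ⊆ [ω]^ω` has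
cardinality less than `𝔡`, then there is `a ∈ A` with `c ≤^∞ a` for every `c ∈ C`. -/
theorem stmt1 (hreg : frakD.ord.cof = frakD)
    (A : Set IncSeq) (hA : DUnbounded A)
    (C : Set IncSeq) (hC : #C < frakD) :
    ∃ a ∈ A, ∀ c ∈ C, LeInf c.1 a.1 :=
  stmt1_general hA.1 hA.2 (hC.trans_eq hreg.symm)
end

section
/- Let U be a free ultrafilter on ℕ with 𝔟(U) = 𝔡 and let X ⊆ [ω]^ω be ≤_U-unbounded. Then there exists a 2U-scale Y ⊆ [ω]^ω such that the product space X × (Y ∪ Fin) is not Menger. -/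
open Cardinal

/-- Subsets of `ℕ` are identified with their characteristic functions `ℕ → Bool`;
this way `P(ℕ)` is the Cantor cube `2^ℕ`, carrying the product topology. -/
abbrev CSet : Type := ℕ → Bool

/-- The subset of `ℕ` coded by `a : CSet`. -/
def supp (a : CSet) : Set ℕ := {n | a n = true}

/-- `a ∈ [ω]^ω`: the coded set is infinite. -/
def InfS (a : CSet) : Prop := (supp a).Infinite

/-- The increasing enumeration of the set coded by `a`. -/
noncomputable def enum (a : CSet) : ℕ → ℕ := Nat.nth (fun n => a n = true)

/-- `a ≤* b`: the set `[a ≤ b]` (computed on increasing enumerations) is cofinite. -/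
def LeStarS (a b : CSet) : Prop := {n | ¬ enum a n ≤ enum b n}.Finite

/-- `a ≤_U b`: the set `[a ≤ b]` (computed on increasing enumerations) is in `U`. -/
def LeUS (U : Ultrafilter ℕ) (a b : CSet) : Prop := {n | enum a n ≤ enum b n} ∈ U

/-- A subset of `[ω]^ω` is bounded if some element of `[ω]^ω` `≤*`-dominates it. -/
def BoundedS (A : Set CSet) : Prop := ∃ b : CSet, InfS b ∧ ∀ a ∈ A, LeStarS a b

/-- A subset of `[ω]^ω` is `≤_U`-bounded if some element of `[ω]^ω` `≤_U`-dominates it. -/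
def UBoundedS (U : Ultrafilter ℕ) (A : Set CSet) : Prop :=
  ∃ b : CSet, InfS b ∧ ∀ a ∈ A, LeUS U a b

/-- `D ⊆ [ω]^ω` is dominating if it `≤*`-dominates every element of `[ω]^ω`. -/
def DominatingS (D : Set CSet) : Prop :=
  (∀ d ∈ D, InfS d) ∧ ∀ a : CSet, InfS a → ∃ d ∈ D, LeStarS a d

/-- `𝔡`: the least cardinality of a dominating subset of `[ω]^ω`. -/
noncomputable def frakDS : Cardinal := sInf {c | ∃ D : Set CSet, DominatingS D ∧ c = #D}

/-- `𝔟(U)`: the least cardinality of a `≤_U`-unbounded subset of `[ω]^ω`. -/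
noncomputable def frakBUS (U : Ultrafilter ℕ) : Cardinal :=
  sInf {c | ∃ A : Set CSet, (∀ a ∈ A, InfS a) ∧ ¬ UBoundedS U A ∧ c = #A}

/-- `Y ⊆ [ω]^ω` is a `U`-scale if for every `b ∈ [ω]^ω` the relation `b ≤_U y` holds
for all but fewer than `𝔟(U)` many `y ∈ Y`. -/
def UScaleS (U : Ultrafilter ℕ) (Y : Set CSet) : Prop :=
  (∀ y ∈ Y, InfS y) ∧
    ∀ b : CSet, InfS b → #({y ∈ Y | ¬ LeUS U b y} : Set CSet) < frakBUS U

/-- `Fin`: the family of (codes of) finite subsets of `ℕ`. -/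
def FinS : Set CSet := {a | (supp a).Finite}

/-- `2u := {2n : n ∈ u}` on codes. -/
def double (x : CSet) : CSet := fun n => if n % 2 = 0 then x (n / 2) else false

/-- `a ⊎ b := {2k : k ∈ a} ∪ {2k+1 : k ∈ b}` on codes. -/
def uplus (a b : CSet) : CSet := fun n => if n % 2 = 0 then a (n / 2) else b (n / 2)

/-- Symmetric difference `⊕` on codes. -/
def symmD (a b : CSet) : CSet := fun n => xor (a n) (b n)

/-- `2U`: the ultrafilter generated by `{2u : u ∈ U}`, i.e. the pushforward of `U`
under `n ↦ 2n`. -/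
def twoU (U : Ultrafilter ℕ) : Ultrafilter ℕ := U.map (fun n => 2 * n)

/-- A space is Menger if for every sequence of open covers there are finite
subfamilies whose unions form a cover. -/
def Menger (Z : Type*) [TopologicalSpace Z] : Prop :=
  ∀ 𝒰 : ℕ → Set (Set Z), (∀ n, (∀ u ∈ 𝒰 n, IsOpen u) ∧ ⋃₀ 𝒰 n = Set.univ) →
    ∃ F : ℕ → Set (Set Z), (∀ n, F n ⊆ 𝒰 n ∧ (F n).Finite) ∧ (⋃ n, ⋃₀ F n) = Set.univ

/-!
Enumerate a dominating family of size `𝔡` in order type `𝔡`. Since `𝔟(U) = 𝔡`, the predecessors of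
each member are `≤_U`-bounded, so enlarging each member beyond such a bound yields a dominating
family `D` that is also a `U`-scale. Since `X` is `≤_U`-unbounded, every `d ∈ D` lies
`≤_U`-below some `x_d ∈ X`. Put `Y = {x_d ⊎ d : d ∈ D}`. The `2n`-th element of `x_d ⊎ d` is at
least `2 * min (x_d(n)) (d(n))`, which makes `Y` a `2U`-scale.

The map `(x, y) ↦ 2x ⊕ y` sends `X × (Y ∪ Fin)` continuously into `[ω]^ω`, and it sends
`(x_d, x_d ⊎ d)` to `{2k + 1 : k ∈ d}`, because the even parts cancel. Its image is therefore
dominating, whereas a continuous image of a Menger space in `[ω]^ω` is never dominating.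
-/

open Filter Function

section Enumeration

theorem InfS.of_comp {a : CSet} {g : ℕ → ℕ} (hg : Injective g) (h : InfS (a ∘ g)) : InfS a :=
  fun ha => h (ha.preimage hg.injOn)

theorem enum_comp_of_strictMono {a : CSet} (ha : InfS a) {g : ℕ → ℕ} (hg : StrictMono g)
    (hag : supp a ⊆ Set.range g) (n : ℕ) : g (enum (a ∘ g) n) = enum a n :=
  Nat.nth_comp_of_strictMono hg hag fun hfin => absurd hfin ha

theorem exists_infS_enum_eq {g : ℕ → ℕ} (hg : StrictMono g) : ∃ c : CSet, InfS c ∧ enum c = g := by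
  classical
  let c : CSet := fun k => decide (k ∈ Set.range g)
  have hsupp : supp c = Set.range g := by ext k; simp [supp, c]
  have hc : InfS c := by
    rw [InfS, hsupp]
    exact Set.infinite_range_of_injective hg.injective
  refine ⟨c, hc, funext fun n => ?_⟩
  rw [← enum_comp_of_strictMono hc hg hsupp.subset]
  exact congrArg g (Nat.nth_of_forall fun m _ => by simp [c])

theorem exists_infS_le_enum (f : ℕ → ℕ) : ∃ c : CSet, InfS c ∧ f ≤ enum c := by
  have hmono : StrictMono fun n => partialSups f n + n :=
    (partialSups f).monotone.add_strictMono strictMono_id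
  obtain ⟨c, hc, hce⟩ := exists_infS_enum_eq hmono
  exact ⟨c, hc, fun n => hce ▸ (le_partialSups f n).trans (Nat.le_add_right _ _)⟩

theorem le_enum_iff {a : CSet} (ha : InfS a) {m n : ℕ} :
    m ≤ enum a n ↔ Nat.count (fun k => a k = true) m ≤ n :=
  (Nat.count_le_iff_le_nth ha).symm

theorem enum_eq_iff {a : CSet} (ha : InfS a) {m n : ℕ} :
    enum a n = m ↔ a m = true ∧ Nat.count (fun k => a k = true) m = n := by
  constructor
  · rintro rfl
    exact ⟨Nat.nth_mem_of_infinite ha n, Nat.count_nth_of_infinite ha n⟩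
  · rintro ⟨hm, rfl⟩
    exact Nat.nth_count hm

theorem continuous_count (m : ℕ) :
    Continuous fun a : CSet => Nat.count (fun k => a k = true) m := by
  induction m with
  | zero => simpa only [Nat.count_zero] using continuous_const
  | succ m ih =>
    simp only [Nat.count_succ]
    exact ih.add ((continuous_of_discreteTopology
      (f := fun q : Bool => if q = true then 1 else 0)).comp (continuous_apply m))

theorem continuousOn_enum : ContinuousOn enum {a | InfS a} := by
  rw [continuousOn_iff_continuous_domRestrict]
  refine continuous_pi fun n => continuous_discrete_rng.2 fun m => ?_
  have hpre : (fun a : {a | InfS a} => enum a n) ⁻¹' {m} =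
      (fun a : {a | InfS a} => (a.1 m, Nat.count (fun k => a.1 k = true) m)) ⁻¹' {(true, n)} := by
    ext a
    simp [enum_eq_iff a.2]
  change IsOpen ((fun a : {a | InfS a} => enum a n) ⁻¹' {m})
  rw [hpre]
  exact (isOpen_discrete _).preimage
    (((continuous_apply m).prodMk (continuous_count m)).comp continuous_subtype_val)

end Enumeration

section SetOperations

theorem uplus_two_mul (a b : CSet) (n : ℕ) : uplus a b (2 * n) = a n := by
  simp [uplus]

theorem uplus_two_mul_add_one (a b : CSet) (n : ℕ) : uplus a b (2 * n + 1) = b n := by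
  have h : (2 * n + 1) / 2 = n := by lia
  simp [uplus, h]

theorem infS_uplus {a b : CSet} (hb : InfS b) : InfS (uplus a b) := by
  have hcomp : (uplus a b ∘ fun n => 2 * n + 1) = b := funext (uplus_two_mul_add_one a b)
  exact .of_comp (fun m n hmn => by simpa using hmn) (hcomp.symm ▸ hb)

theorem count_uplus (a b : CSet) (m : ℕ) :
    Nat.count (fun k => uplus a b k = true) (2 * m) =
      Nat.count (fun k => a k = true) m + Nat.count (fun k => b k = true) m := by
  induction m with
  | zero => simp
  | succ m ih =>
    simp only [Nat.mul_succ, Nat.count_succ, ih, uplus_two_mul, uplus_two_mul_add_one]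
    lia

theorem two_mul_min_le_enum_uplus {a b : CSet} (ha : InfS a) (hb : InfS b) (n : ℕ) :
    2 * min (enum a n) (enum b n) ≤ enum (uplus a b) (2 * n) := by
  rw [le_enum_iff (infS_uplus hb), count_uplus, two_mul n]
  exact add_le_add ((le_enum_iff ha).1 (min_le_left _ _)) ((le_enum_iff hb).1 (min_le_right _ _))

theorem enum_uplus_bot {b : CSet} (hb : InfS b) (n : ℕ) :
    enum (uplus ⊥ b) n = 2 * enum b n + 1 := by
  have hmono : StrictMono fun n : ℕ => 2 * n + 1 := fun m n hmn => by simpa using hmn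
  have hsupp : supp (uplus ⊥ b) ⊆ Set.range fun n => 2 * n + 1 := fun k hk => by
    by_contra hodd
    obtain ⟨m, rfl⟩ : Even k := Nat.not_odd_iff_even.1 fun ⟨m, hm⟩ => hodd ⟨m, hm.symm⟩
    simp [supp, ← two_mul, uplus_two_mul] at hk
  rw [← enum_comp_of_strictMono (infS_uplus hb) hmono hsupp]
  exact congrArg (fun c => 2 * enum c n + 1) (funext (uplus_two_mul_add_one ⊥ b))

theorem symmD_double_uplus (x a b : CSet) :
    symmD (double x) (uplus a b) = uplus (symmD x a) b := by
  funext n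
  by_cases h : n % 2 = 0 <;> simp [symmD, double, uplus, h]

theorem infS_symmD_double_uplus (x a : CSet) {b : CSet} (hb : InfS b) :
    InfS (symmD (double x) (uplus a b)) :=
  symmD_double_uplus x a b ▸ infS_uplus hb

theorem symmD_self (a : CSet) : symmD a a = ⊥ :=
  funext fun n => Bool.xor_self (a n)

theorem infS_double {x : CSet} (hx : InfS x) : InfS (double x) := by
  have hcomp : (double x ∘ fun n => 2 * n) = x := by funext n; simp [double]
  exact .of_comp (mul_right_injective₀ two_ne_zero) (hcomp.symm ▸ hx)

theorem infS_symmD_of_finite {a b : CSet} (ha : InfS a) (hb : b ∈ FinS) : InfS (symmD a b) := by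
  refine (ha.sdiff hb).mono fun n hn => ?_
  obtain ⟨hna, hnb⟩ : a n = true ∧ ¬ b n = true := hn
  simp [supp, symmD, hna, hnb]

theorem continuous_double : Continuous double := by
  refine continuous_pi fun n => ?_
  unfold double
  split_ifs <;> fun_prop

theorem continuous_symmD : Continuous fun p : CSet × CSet => symmD p.1 p.2 :=
  continuous_pi fun n => (continuous_of_discreteTopology (f := fun q : Bool × Bool =>
    xor q.1 q.2)).comp (by fun_prop : Continuous fun p : CSet × CSet => (p.1 n, p.2 n))

end SetOperations

section Menger

variable {Z : Type*} [TopologicalSpace Z]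

theorem Menger.exists_forall_exists_le (hZ : Menger Z) {g : Z → ℕ → ℕ} (hg : Continuous g) :
    ∃ f : ℕ → ℕ, ∀ z, ∃ n, g z n ≤ f n := by
  let V (n m : ℕ) : Set Z := {z | g z n ≤ m}
  have hopen (n m : ℕ) : IsOpen (V n m) :=
    (isOpen_discrete (Set.Iic m)).preimage ((continuous_apply n).comp hg)
  obtain ⟨F, hF, hcov⟩ := hZ (fun n => Set.range (V n)) fun n =>
    ⟨Set.forall_mem_range.2 (hopen n),
      Set.eq_univ_of_forall fun z => ⟨V n (g z n), ⟨_, rfl⟩, le_refl (g z n)⟩⟩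
  have hbound (n : ℕ) : ∃ M, ∀ u ∈ F n, u ⊆ V n M := by
    choose! r hr using (hF n).1
    obtain ⟨M, hM⟩ := ((hF n).2.image r).bddAbove
    refine ⟨M, fun u hu z hz => ?_⟩
    rw [← hr hu] at hz
    exact le_trans hz (hM (Set.mem_image_of_mem r hu))
  choose f hf using hbound
  refine ⟨f, fun z => ?_⟩
  obtain ⟨n, u, hu, hzu⟩ := Set.mem_iUnion.1 (hcov ▸ Set.mem_univ z : z ∈ ⋃ n, ⋃₀ F n)
  exact ⟨n, hf n u hu hzu⟩

theorem Menger.exists_forall_frequently_le (hZ : Menger Z) {g : Z → ℕ → ℕ} (hg : Continuous g) :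
    ∃ f : ℕ → ℕ, ∀ z, ∃ᶠ n in atTop, g z n ≤ f n := by
  have hshift (k : ℕ) : ∃ f : ℕ → ℕ, ∀ z, ∃ n, g z (n + k) ≤ f n :=
    hZ.exists_forall_exists_le (g := fun z n => g z (n + k)) (by fun_prop)
  choose f hf using hshift
  refine ⟨fun n => (Finset.range (n + 1)).sup fun k => f k (n - k), fun z =>
    frequently_atTop.2 fun k => ?_⟩
  obtain ⟨n, hn⟩ := hf k z
  refine ⟨n + k, Nat.le_add_left k n, ?_⟩
  calc g z (n + k) ≤ f k (n + k - k) := by rwa [Nat.add_sub_cancel]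
    _ ≤ (Finset.range (n + k + 1)).sup fun j => f j (n + k - j) :=
      Finset.le_sup (f := fun j => f j (n + k - j)) (Finset.mem_range.2 (by lia))

theorem leStarS_iff {a b : CSet} : LeStarS a b ↔ enum a ≤ᶠ[cofinite] enum b :=
  Iff.rfl

theorem Menger.not_dominatingS_range (hZ : Menger Z) {φ : Z → CSet} (hφ : Continuous φ) :
    ¬ DominatingS (Set.range φ) := by
  rintro ⟨hinf, hdom⟩
  obtain ⟨f, hf⟩ := hZ.exists_forall_frequently_le
    (continuousOn_enum.comp_continuous hφ (Set.forall_mem_range.1 hinf))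
  obtain ⟨c, hc, hfc⟩ := exists_infS_le_enum (f + 1)
  obtain ⟨_, ⟨z, rfl⟩, hcz⟩ := hdom c hc
  rw [leStarS_iff, Nat.cofinite_eq_atTop] at hcz
  obtain ⟨n, hzf, hcz⟩ := ((hf z).and_eventually hcz).exists
  exact absurd ((hfc n).trans (hcz.trans hzf)) (Nat.not_succ_le_self (f n))

end Menger

section Cardinals

variable {U : Ultrafilter ℕ}

theorem leUS_iff {a b : CSet} : LeUS U a b ↔ enum a ≤ᶠ[U] enum b :=
  Iff.rfl

theorem leUS_map_iff {h : ℕ → ℕ} {a b : CSet} :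
    LeUS (U.map h) a b ↔ enum a ∘ h ≤ᶠ[U] enum b ∘ h :=
  Iff.rfl

theorem LeStarS.leUS (hU : Free U) {a b : CSet} (hab : LeStarS a b) : LeUS U a b :=
  leUS_iff.2 ((leStarS_iff.1 hab).filter_mono hU)

theorem exists_mem_leUS_of_not_uBoundedS {X : Set CSet} (hX : ¬ UBoundedS U X) {a : CSet}
    (ha : InfS a) : ∃ x ∈ X, LeUS U a x := by
  by_contra! h
  refine hX ⟨a, ha, fun x hx => leUS_iff.2 ?_⟩
  filter_upwards [Ultrafilter.eventually_not.2 (h x hx)] with n hn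
  exact le_of_not_ge hn

theorem not_uBoundedS_setOf_infS : ¬ UBoundedS U {a | InfS a} := by
  rintro ⟨b, -, hb⟩
  obtain ⟨c, hc, hbc⟩ := exists_infS_le_enum (enum b + 1)
  obtain ⟨n, hn⟩ := (leUS_iff.1 (hb c hc)).exists
  exact absurd ((hbc n).trans hn) (Nat.not_succ_le_self (enum b n))

theorem exists_mk_eq_frakBUS (U : Ultrafilter ℕ) :
    ∃ A : Set CSet, (∀ a ∈ A, InfS a) ∧ ¬ UBoundedS U A ∧ frakBUS U = #A :=
  csInf_mem (s := {c | ∃ A : Set CSet, (∀ a ∈ A, InfS a) ∧ ¬ UBoundedS U A ∧ c = #A})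
    ⟨_, {a | InfS a}, fun _ ha => ha, not_uBoundedS_setOf_infS, rfl⟩

theorem exists_mk_eq_frakDS : ∃ D : Set CSet, DominatingS D ∧ frakDS = #D :=
  csInf_mem (s := {c | ∃ D : Set CSet, DominatingS D ∧ c = #D})
    ⟨_, {a | InfS a}, ⟨fun _ ha => ha, fun a ha => ⟨a, ha, by simp [LeStarS]⟩⟩, rfl⟩

theorem exists_forall_eventuallyLE_enum {ι : Type} (hι : #ι < frakBUS U) (f : ι → ℕ → ℕ) :
    ∃ b : CSet, InfS b ∧ ∀ i, f i ≤ᶠ[U] enum b := by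
  choose e he hfe using fun i => exists_infS_le_enum (f i)
  have hbdd : UBoundedS U (Set.range e) := by
    by_contra hunbdd
    exact notMem_of_lt_csInf' (mk_range_le.trans_lt hι)
      ⟨_, Set.forall_mem_range.2 he, hunbdd, rfl⟩
  obtain ⟨b, hb, heb⟩ := hbdd
  exact ⟨b, hb, fun i => (leUS_iff.1 (heb _ ⟨i, rfl⟩)).mono fun n hn => (hfe i n).trans hn⟩

theorem frakBUS_le_frakBUS_map (U : Ultrafilter ℕ) {h : ℕ → ℕ} (hh : Injective h) :
    frakBUS U ≤ frakBUS (U.map h) := by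
  obtain ⟨A, -, hA, hcard⟩ := exists_mk_eq_frakBUS (U.map h)
  by_contra! hlt
  obtain ⟨b, -, hAb⟩ :=
    exists_forall_eventuallyLE_enum (hcard ▸ hlt) fun a : A => enum a ∘ h
  obtain ⟨c, hc, hbc⟩ := exists_infS_le_enum (extend h (enum b) 0)
  refine hA ⟨c, hc, fun a ha => leUS_map_iff.2 ?_⟩
  filter_upwards [hAb ⟨a, ha⟩] with n hn
  exact hn.trans (hh.extend_apply (enum b) 0 n ▸ hbc (h n))

end Cardinals

section Scales

variable {U : Ultrafilter ℕ}

theorem exists_infS_forall_lt_eventuallyLE {ι : Type} [Preorder ι] {i : ι}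
    (hi : #(Set.Iio i) < frakBUS U) (f : ι → ℕ → ℕ) :
    ∃ e : CSet, InfS e ∧ f i ≤ enum e ∧ ∀ j < i, f j ≤ᶠ[U] enum e := by
  obtain ⟨b, -, hfb⟩ := exists_forall_eventuallyLE_enum hi fun j => f j
  obtain ⟨e, he, hle⟩ := exists_infS_le_enum (f i ⊔ enum b)
  exact ⟨e, he, le_sup_left.trans hle, fun j hj =>
    (hfb ⟨j, hj⟩).mono fun n hn => hn.trans (le_sup_right.trans (hle n))⟩

theorem exists_dominatingS_uScaleS (hU : Free U) (hbd : frakBUS U = frakDS) :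
    ∃ D : Set CSet, DominatingS D ∧ UScaleS U D := by
  obtain ⟨A, ⟨-, hAdom⟩, hcard⟩ := exists_mk_eq_frakDS
  obtain ⟨d⟩ : Nonempty ((frakBUS U).ord.ToType ≃ A) :=
    Cardinal.eq.1 (by rw [mk_ord_toType, hbd, hcard])
  have hIio (i : (frakBUS U).ord.ToType) : #(Set.Iio i) < frakBUS U :=
    (mk_Iio_lt i (by rw [mk_ord_toType, Ordinal.type_toType])).trans_eq (mk_ord_toType _)
  choose e he hde hlt using fun i => exists_infS_forall_lt_eventuallyLE (hIio i) fun j => enum (d j)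
  have hdom (b : CSet) (hb : InfS b) : ∃ j, LeStarS b (d j) := by
    obtain ⟨a, ha, hba⟩ := hAdom b hb
    exact ⟨d.symm ⟨a, ha⟩, by rwa [d.apply_symm_apply]⟩
  have hbe {b : CSet} {j} (hbj : LeStarS b (d j)) : LeStarS b (e j) :=
    (leStarS_iff.1 hbj).mono fun n hn => hn.trans (hde j n)
  refine ⟨Set.range e, ⟨Set.forall_mem_range.2 he, fun b hb => ?_⟩,
    Set.forall_mem_range.2 he, fun b hb => ?_⟩
  · obtain ⟨j, hbj⟩ := hdom b hb
    exact ⟨e j, ⟨j, rfl⟩, hbe hbj⟩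
  · obtain ⟨j, hbj⟩ := hdom b hb
    have hsub : {y ∈ Set.range e | ¬ LeUS U b y} ⊆ e '' Set.Iio j := by
      rintro _ ⟨⟨i, rfl⟩, hi⟩
      refine ⟨i, Set.mem_Iio.2 (lt_of_not_ge fun hji => hi ?_), rfl⟩
      rcases hji.eq_or_lt with rfl | hji
      · exact (hbe hbj).leUS hU
      · exact leUS_iff.2 ((leUS_iff.1 (hbj.leUS hU)).trans (hlt i j hji))
    exact ((mk_le_mk_of_subset hsub).trans mk_image_le).trans_lt (hIio j)

theorem UScaleS.image_uplus {D : Set CSet} (hD : UScaleS U D) {x : CSet → CSet}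
    (hx : ∀ d ∈ D, InfS (x d)) (hdx : ∀ d ∈ D, LeUS U d (x d)) :
    UScaleS (twoU U) ((fun d => uplus (x d) d) '' D) := by
  refine ⟨Set.forall_mem_image.2 fun d hd => infS_uplus (hD.1 d hd), fun b _ => ?_⟩
  obtain ⟨c, hc, hbc⟩ := exists_infS_le_enum fun n => enum b (2 * n)
  have hsub : {y ∈ (fun d => uplus (x d) d) '' D | ¬ LeUS (twoU U) b y} ⊆
      (fun d => uplus (x d) d) '' {d ∈ D | ¬ LeUS U c d} := by
    rintro _ ⟨⟨d, hd, rfl⟩, hbd⟩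
    refine ⟨d, ⟨hd, fun hcd => hbd (leUS_map_iff.2 ?_)⟩, rfl⟩
    filter_upwards [hcd, hdx d hd] with n hcd hdx
    calc enum b (2 * n) ≤ enum d n := (hbc n).trans hcd
      _ = min (enum (x d) n) (enum d n) := (min_eq_right hdx).symm
      _ ≤ 2 * min (enum (x d) n) (enum d n) := Nat.le_mul_of_pos_left _ two_pos
      _ ≤ enum (uplus (x d) d) (2 * n) := two_mul_min_le_enum_uplus (hx d hd) (hD.1 d hd) n
  exact ((mk_le_mk_of_subset hsub).trans mk_image_le).trans_lt
    ((hD.2 c hc).trans_le (frakBUS_le_frakBUS_map U (mul_right_injective₀ two_ne_zero)))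

end Scales

/-- if `U` is a free ultrafilter with `𝔟(U) = 𝔡` and `X ⊆ [ω]^ω` is
`≤_U`-unbounded, then there is a `2U`-scale `Y` such that `X × (Y ∪ Fin)` is not
Menger. -/
theorem stmt3 (U : Ultrafilter ℕ) (hU : Free U) (hbd : frakBUS U = frakDS)
    (X : Set CSet) (hXinf : ∀ x ∈ X, InfS x) (hX : ¬ UBoundedS U X) :
    ∃ Y : Set CSet, UScaleS (twoU U) Y ∧ ¬ Menger (↥X × ↥(Y ∪ FinS)) := by
  obtain ⟨D, hD, hscale⟩ := exists_dominatingS_uScaleS hU hbd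
  choose! x hxX hdx using fun d hd => exists_mem_leUS_of_not_uBoundedS hX (hD.1 d hd)
  refine ⟨(fun d => uplus (x d) d) '' D,
    hscale.image_uplus (fun d hd => hXinf _ (hxX d hd)) hdx, fun hM => ?_⟩
  refine hM.not_dominatingS_range (φ := fun p => symmD (double p.1) p.2)
    (continuous_symmD.comp ((continuous_double.comp continuous_subtype_val).prodMap
      continuous_subtype_val)) ⟨?_, fun b hb => ?_⟩
  · rintro _ ⟨⟨⟨a, ha⟩, ⟨_, ⟨d, hd, rfl⟩ | hy⟩⟩, rfl⟩
    · exact infS_symmD_double_uplus a (x d) (hD.1 d hd)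
    · exact infS_symmD_of_finite (infS_double (hXinf a ha)) hy
  · obtain ⟨d, hd, hbd⟩ := hD.2 b hb
    refine ⟨_, ⟨(⟨x d, hxX d hd⟩, ⟨uplus (x d) d, Or.inl ⟨d, hd, rfl⟩⟩), rfl⟩, leStarS_iff.2 ?_⟩
    filter_upwards [leStarS_iff.1 hbd] with n hn
    rw [symmD_double_uplus, symmD_self, enum_uplus_bot (hD.1 d hd)]
    lia
end
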